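/- arXiv:2001.04570 — 5 statements merged into one kernel-verified Lean document; each statement's English description precedes it below -/
import Mathlib

section
/- Suppose P is a right-LCM monoid and P₁ is a submonoid of P that is closed under factorization. Then P₁ is itself a right-LCM monoid: for all x, y ∈ P₁, either xP₁ ∩ yP₁ = ∅ or xP₁ ∩ yP₁ = zP₁ for some z ∈ P₁. -/
/-!
Closure under factorization makes `P₁` inherit divisibility from `P`: for `x ∈ P₁` one has
`xP₁ = xP ∩ P₁`. If `xP₁ ∩ yP₁` contains some `w`, then `xP ∩ yP` is nonempty, so it equals `rP`
for some `r`; as `r` is a factor of `w ∈ P₁`, it lies in `P₁`. Intersecting `xP ∩ yP = rP`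
with `P₁` gives `xP₁ ∩ yP₁ = rP₁`.
-/

/-- A submonoid `P₁` of a right-LCM monoid `P` that is closed under
factorization is itself right-LCM. -/
theorem submonoid_closed_under_factorization_rightLCM {P : Type*} [Monoid P]
    (hlc : ∀ p x y : P, p * x = p * y → x = y)
    (hlcm : ∀ p q : P,
      {w : P | ∃ a : P, w = p * a} ∩ {w : P | ∃ a : P, w = q * a} = ∅ ∨
      ∃ r : P, {w : P | ∃ a : P, w = p * a} ∩ {w : P | ∃ a : P, w = q * a}
        = {w : P | ∃ a : P, w = r * a})
    (P₁ : Submonoid P)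
    (hfac : ∀ x y : P, x * y ∈ P₁ → x ∈ P₁ ∧ y ∈ P₁) :
    ∀ x ∈ P₁, ∀ y ∈ P₁,
      {w : P | ∃ a ∈ P₁, w = x * a} ∩ {w : P | ∃ a ∈ P₁, w = y * a} = ∅ ∨
      ∃ z ∈ P₁, {w : P | ∃ a ∈ P₁, w = x * a} ∩ {w : P | ∃ a ∈ P₁, w = y * a}
        = {w : P | ∃ a ∈ P₁, w = z * a} := by
  -- For `x ∈ P₁`, the ideal `xP₁` of `P₁` is the trace on `P₁` of the ideal `xP` of `P`.
  have key : ∀ x ∈ P₁, ∀ w : P, (∃ a ∈ P₁, w = x * a) ↔ w ∈ P₁ ∧ ∃ a : P, w = x * a := by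
    intro x hx w
    constructor
    · rintro ⟨a, ha, rfl⟩
      exact ⟨P₁.mul_mem hx ha, a, rfl⟩
    · rintro ⟨hw, a, rfl⟩
      exact ⟨a, (hfac x a hw).2, rfl⟩
  intro x hx y hy
  rw [or_iff_not_imp_left, ← ne_eq, ← Set.nonempty_iff_ne_empty]
  rintro ⟨w, hwx, hwy⟩
  obtain ⟨hw, hwx'⟩ := (key x hx w).1 hwx
  obtain ⟨-, hwy'⟩ := (key y hy w).1 hwy
  rcases hlcm x y with h | ⟨r, h⟩
  · exact absurd (h.subset ⟨hwx', hwy'⟩) (Set.notMem_empty w)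
  · obtain ⟨c, hc⟩ := h.subset ⟨hwx', hwy'⟩
    -- The generator `r` divides the common multiple `w ∈ P₁`, hence lies in `P₁`.
    have hr : r ∈ P₁ := (hfac r c (hc ▸ hw)).1
    refine ⟨r, hr, ?_⟩
    ext v
    have hv := Set.ext_iff.1 h v
    simp only [Set.mem_inter_iff, Set.mem_ofPred_eq] at hv ⊢
    rw [key x hx, key y hy, key r hr, ← hv]
    tauto
end

section
/- Let P₁ be a submonoid of a right-LCM monoid P, and assume that the inclusion P₁ ⊆ P is closed under factorization and preserves orthogonality. Then P₁ respects the LCM of P: for all x, y ∈ P₁, xP ∩ yP = (xP₁ ∩ yP₁)·P. -/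
/-!
If `xP ∩ yP` is nonempty, then so is `xP₁ ∩ yP₁` by preservation of orthogonality; let `z` be one
of its elements. Write `xP ∩ yP = rP`. Then `r` is a left factor of `z ∈ P₁`, so `r ∈ P₁`, and the
cofactors of `x` and `y` in `r` lie in `P₁` as well, again by closure under factorization. Hence
`r ∈ xP₁ ∩ yP₁`, which gives `xP ∩ yP = rP ⊆ (xP₁ ∩ yP₁)P`; the other inclusion is associativity.
-/


/-- If the inclusion of a submonoid `P₁` in a right-LCM monoid `P` is closed
under factorization and preserves orthogonality, then `P₁` respects the LCM of `P`:
`xP ∩ yP = (xP₁ ∩ yP₁)·P` for all `x, y ∈ P₁`. -/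
theorem closed_factorization_preserves_orth_implies_respects_lcm {P : Type*} [Monoid P]
    (hlc : ∀ p x y : P, p * x = p * y → x = y)
    (hlcm : ∀ p q : P,
      {w : P | ∃ a : P, w = p * a} ∩ {w : P | ∃ a : P, w = q * a} = ∅ ∨
      ∃ r : P, {w : P | ∃ a : P, w = p * a} ∩ {w : P | ∃ a : P, w = q * a}
        = {w : P | ∃ a : P, w = r * a})
    (P₁ : Submonoid P)
    (hfac : ∀ x y : P, x * y ∈ P₁ → x ∈ P₁ ∧ y ∈ P₁)
    (horth : ∀ x ∈ P₁, ∀ y ∈ P₁,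
      ({w : P | ∃ a ∈ P₁, w = x * a} ∩ {w : P | ∃ a ∈ P₁, w = y * a} = ∅ ↔
        {w : P | ∃ a : P, w = x * a} ∩ {w : P | ∃ a : P, w = y * a} = ∅)) :
    ∀ x ∈ P₁, ∀ y ∈ P₁,
      {w : P | ∃ a : P, w = x * a} ∩ {w : P | ∃ a : P, w = y * a}
        = {w : P | ∃ s ∈ {w : P | ∃ a ∈ P₁, w = x * a} ∩ {w : P | ∃ a ∈ P₁, w = y * a},
            ∃ a : P, w = s * a} := by
  intro x hx y hy
  ext w
  constructor
  · intro hw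
    obtain ⟨z, ⟨a, ha, hza⟩, ⟨b, hb, hzb⟩⟩ :
        ({w : P | ∃ a ∈ P₁, w = x * a} ∩ {w : P | ∃ a ∈ P₁, w = y * a}).Nonempty := by
      rw [Set.nonempty_iff_ne_empty]
      intro h
      rw [(horth x hx y hy).1 h] at hw
      exact hw
    rcases hlcm x y with h | ⟨r, hr⟩
    · rw [h] at hw
      exact hw.elim
    have hzr : z ∈ {w : P | ∃ a : P, w = r * a} := hr ▸ ⟨⟨a, hza⟩, ⟨b, hzb⟩⟩
    obtain ⟨c, hc⟩ := hzr
    have hz : z ∈ P₁ := hza ▸ P₁.mul_mem hx ha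
    have hrP : r ∈ P₁ := (hfac r c (hc ▸ hz)).1
    have hrr : r ∈ {w : P | ∃ a : P, w = x * a} ∩ {w : P | ∃ a : P, w = y * a} :=
      hr ▸ ⟨1, (mul_one r).symm⟩
    obtain ⟨⟨d, hd⟩, ⟨e, he⟩⟩ := hrr
    rw [hr] at hw
    exact ⟨r, ⟨⟨d, (hfac x d (hd ▸ hrP)).2, hd⟩, ⟨e, (hfac y e (he ▸ hrP)).2, he⟩⟩, hw⟩
  · rintro ⟨s, ⟨⟨a, _, hsa⟩, ⟨b, _, hsb⟩⟩, c, rfl⟩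
    exact ⟨⟨a * c, by rw [hsa, mul_assoc]⟩, ⟨b * c, by rw [hsb, mul_assoc]⟩⟩
end

section
/- Let P be a right-LCM monoid and let λ denote the left regular representation on ℓ²(P), where λ(p) is the unique isometric continuous linear map with λ(p)δ_q = δ_{pq}. Then λ is Nica-covariant: for all x, y ∈ P, if xP ∩ yP = rP for some r ∈ P then λ(x)λ(x)* λ(y)λ(y)* = λ(r)λ(r)*, and if xP ∩ yP = ∅ then λ(x)λ(x)* λ(y)λ(y)* = 0. -/
/-!
The range projection `λ(p)λ(p)*` is diagonal in the standard basis: it fixes `δ_w` when `w ∈ pP`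
and kills it otherwise (`nica_rangeProj_single`). This follows from the coordinate formula
`(λ(p)* f)(q) = f(pq)`, together with left cancellation, which makes `q ↦ pq` injective.
A product of two such diagonal projections is the diagonal projection onto the intersection
`xP ∩ yP`, so both identities hold on every `δ_w`, and bounded operators that agree on the standard
basis are equal.
-/

theorem nica_adjoint_apply {P : Type*} [Monoid P] [DecidableEq P]
    (Λ : P → lp (fun _ : P => ℂ) 2 →L[ℂ] lp (fun _ : P => ℂ) 2)
    (hΛ : ∀ p q : P, Λ p (lp.single 2 q 1) = lp.single 2 (p * q) 1)
    (p q : P) (f : lp (fun _ : P => ℂ) 2) :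
    ContinuousLinearMap.adjoint (Λ p) f q = f (p * q) := by
  have h := ContinuousLinearMap.adjoint_inner_right (Λ p) (lp.single 2 q 1) f
  rw [hΛ, lp.inner_single_left, lp.inner_single_left] at h
  simpa using h

/-- The projection `λ(p)λ(p)*` is diagonal, with diagonal the indicator function of `pP`. -/
theorem nica_rangeProj_single {P : Type*} [Monoid P] [DecidableEq P]
    (hlc : ∀ p x y : P, p * x = p * y → x = y)
    (Λ : P → lp (fun _ : P => ℂ) 2 →L[ℂ] lp (fun _ : P => ℂ) 2)
    (hΛ : ∀ p q : P, Λ p (lp.single 2 q 1) = lp.single 2 (p * q) 1)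
    (p w : P) [Decidable (∃ a : P, w = p * a)] :
    Λ p (ContinuousLinearMap.adjoint (Λ p) (lp.single 2 w 1))
      = if ∃ a : P, w = p * a then lp.single 2 w 1 else 0 := by
  split_ifs with hw
  · obtain ⟨a, rfl⟩ := hw
    have h : ContinuousLinearMap.adjoint (Λ p) (lp.single 2 (p * a) 1) = lp.single 2 a 1 := by
      ext q
      rw [nica_adjoint_apply Λ hΛ, lp.single_apply, lp.single_apply]
      have hq : p * q = p * a ↔ q = a := ⟨hlc p q a, fun e => e ▸ rfl⟩
      simp only [Pi.single_apply, hq]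
    rw [h, hΛ]
  · have h : ContinuousLinearMap.adjoint (Λ p) (lp.single 2 w 1) = 0 := by
      ext q
      rw [nica_adjoint_apply Λ hΛ]
      exact lp.single_apply_ne 2 w 1 fun e => hw ⟨q, e.symm⟩
    rw [h, map_zero]

theorem nica_ext_single {P : Type*} [DecidableEq P]
    {S T : lp (fun _ : P => ℂ) 2 →L[ℂ] lp (fun _ : P => ℂ) 2}
    (h : ∀ w : P, S (lp.single 2 w 1) = T (lp.single 2 w 1)) : S = T := by
  refine lp.ext_continuousLinearMap ENNReal.ofNat_ne_top fun w => ?_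
  ext1
  exact h w

/-- The left regular representation of a right-LCM monoid is Nica-covariant:
if `xP ∩ yP = rP` then `λ(x)λ(x)* λ(y)λ(y)* = λ(r)λ(r)*`, and if `xP ∩ yP = ∅` then
`λ(x)λ(x)* λ(y)λ(y)* = 0`. -/
theorem left_regular_representation_nica_covariant {P : Type*} [Monoid P] [DecidableEq P]
    (hlc : ∀ p x y : P, p * x = p * y → x = y)
    (hlcm : ∀ p q : P,
      {w : P | ∃ a : P, w = p * a} ∩ {w : P | ∃ a : P, w = q * a} = ∅ ∨
      ∃ r : P, {w : P | ∃ a : P, w = p * a} ∩ {w : P | ∃ a : P, w = q * a}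
        = {w : P | ∃ a : P, w = r * a})
    (Λ : P → lp (fun _ : P => ℂ) 2 →L[ℂ] lp (fun _ : P => ℂ) 2)
    (hΛ : ∀ p q : P, Λ p (lp.single 2 q 1) = lp.single 2 (p * q) 1) :
    ∀ x y : P,
      (∀ r : P,
        {w : P | ∃ a : P, w = x * a} ∩ {w : P | ∃ a : P, w = y * a}
            = {w : P | ∃ a : P, w = r * a} →
        Λ x * ContinuousLinearMap.adjoint (Λ x) * (Λ y * ContinuousLinearMap.adjoint (Λ y))
          = Λ r * ContinuousLinearMap.adjoint (Λ r)) ∧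
      ({w : P | ∃ a : P, w = x * a} ∩ {w : P | ∃ a : P, w = y * a} = ∅ →
        Λ x * ContinuousLinearMap.adjoint (Λ x) * (Λ y * ContinuousLinearMap.adjoint (Λ y))
          = 0) := by
  classical
  intro x y
  refine ⟨fun r hr => nica_ext_single fun w => ?_, fun he => nica_ext_single fun w => ?_⟩
  · have hw : ((∃ a, w = x * a) ∧ ∃ a, w = y * a) ↔ ∃ a, w = r * a := Set.ext_iff.mp hr w
    simp only [mul_apply_eq_comp, nica_rangeProj_single hlc Λ hΛ, ← hw]
    by_cases hy : ∃ a, w = y * a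
    · simp only [hy, if_true, and_true, nica_rangeProj_single hlc Λ hΛ]
    · simp only [hy, if_false, and_false, map_zero]
  · have hw : ¬((∃ a, w = x * a) ∧ ∃ a, w = y * a) := fun h =>
      Set.notMem_empty w (he ▸ h)
    simp only [mul_apply_eq_comp, nica_rangeProj_single hlc Λ hΛ,
      zero_apply]
    by_cases hy : ∃ a, w = y * a
    · have hx : ¬∃ a, w = x * a := fun h => hw ⟨h, hy⟩
      simp only [hy, hx, if_true, if_false, nica_rangeProj_single hlc Λ hΛ]
    · simp only [hy, if_false, map_zero]
end

section
/- Let S and T be isometries on a complex Hilbert space H with S·T = T·S. Then the following are equivalent: (i) S*T = TS*; (ii) the isometric representation V of ℕ² defined by V_{(m,n)} = SᵐTⁿ is Nica-covariant, i.e. for all (m,n), (m',n') ∈ ℕ²: (SᵐTⁿ)(SᵐTⁿ)* (Sᵐ'Tⁿ')(Sᵐ'Tⁿ')* = (S^{max(m,m')} T^{max(n,n')})(S^{max(m,m')} T^{max(n,n')})*. -/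
/-!
Write `P m = Sᵐ(S*)ᵐ` and `Q n = Tⁿ(T*)ⁿ` for the range projections of the powers of `S` and `T`.
If `S` and `T` doubly commute, then `Q n` commutes with `S` and `S*`, so the range projection of
`SᵐTⁿ` is `P m * Q n` (`range_proj_mul`), and all the `P m`, `Q n` commute with one another. Nica
covariance thus splits into `P m * P m' = P (max m m')` and the same identity for `Q`
(`range_proj_pow_mul`), each of which holds for any isometry because the ranges of its powers are
nested.

Conversely, covariance at `(1, 0)` and `(0, 1)` reads `SS*TT* = STT*S*`. Multiplying by `S*` on the
left and by `T` on the right gives `S*T = TT*S*T = TS*T*T = TS*`.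

Only the multiplication and the adjoint matter, so the lemmas are stated in a monoid with
involution.
-/

/-- The range projections of the powers of an isometry multiply like the indicators of a decreasing
sequence of sets. -/
theorem range_proj_pow_mul {A : Type*} [Monoid A] [StarMul A] {s : A} (hs : star s * s = 1)
    (m m' : ℕ) :
    s ^ m * star s ^ m * (s ^ m' * star s ^ m') = s ^ max m m' * star s ^ max m m' := by
  have key (k : ℕ) : star s ^ k * s ^ k = 1 := by
    induction k with
    | zero => simp
    | succ k ih =>
      rw [pow_succ, pow_succ', mul_assoc, ← mul_assoc (star s) s, hs, one_mul, ih]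
  rcases le_total m m' with h | h
  · obtain ⟨k, rfl⟩ := Nat.exists_eq_add_of_le h
    rw [max_eq_right h, ← mul_assoc, pow_add s, mul_assoc (s ^ m), ← mul_assoc (star s ^ m), key,
      one_mul]
  · obtain ⟨k, rfl⟩ := Nat.exists_eq_add_of_le' h
    rw [max_eq_left h, mul_assoc, pow_add (star s), mul_assoc (star s ^ k),
      ← mul_assoc (star s ^ m'), key, one_mul]

theorem range_proj_mul {A : Type*} [Monoid A] [StarMul A] {s t : A} (hst : Commute s t)
    (h : Commute (star s) t) (m n : ℕ) :
    s ^ m * t ^ n * star (s ^ m * t ^ n) = s ^ m * star s ^ m * (t ^ n * star t ^ n) := by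
  have hq : Commute (t ^ n * star t ^ n) (star s ^ m) :=
    ((h.symm.pow_pow n m).mul_left (hst.symm.star_star.pow_pow n m))
  rw [star_mul, star_pow, star_pow, mul_assoc, ← mul_assoc (t ^ n), hq.eq, mul_assoc]


/-- For commuting isometries `S, T` on a complex Hilbert space, the doubly
commuting condition `S*T = TS*` is equivalent to Nica covariance of the isometric
representation `(m,n) ↦ SᵐTⁿ` of `ℕ²`. -/
theorem doubly_commuting_iff_nica_covariant
    {H : Type*} [NormedAddCommGroup H] [InnerProductSpace ℂ H] [CompleteSpace H]
    (S T : H →L[ℂ] H)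
    (hS : ContinuousLinearMap.adjoint S * S = 1)
    (hT : ContinuousLinearMap.adjoint T * T = 1)
    (hST : S * T = T * S) :
    (ContinuousLinearMap.adjoint S * T = T * ContinuousLinearMap.adjoint S) ↔
    (∀ m n m' n' : ℕ,
      (S ^ m * T ^ n) * ContinuousLinearMap.adjoint (S ^ m * T ^ n) *
        ((S ^ m' * T ^ n') * ContinuousLinearMap.adjoint (S ^ m' * T ^ n')) =
      (S ^ max m m' * T ^ max n n') *
        ContinuousLinearMap.adjoint (S ^ max m m' * T ^ max n n')) := by
  simp only [← ContinuousLinearMap.star_eq_adjoint] at *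
  constructor
  · intro h m n m' n'
    have hc : Commute S T := hST
    have h1 : Commute (star S) T := h
    have h2 : Commute S (star T) := by simpa using h1.star_star
    have hpq : Commute (T ^ n * star T ^ n) (S ^ m' * star S ^ m') :=
      ((hc.symm.pow_pow n m').mul_right (h1.symm.pow_pow n m')).mul_left
        ((h2.symm.pow_pow n m').mul_right (hc.symm.star_star.pow_pow n m'))
    rw [range_proj_mul hc h1, range_proj_mul hc h1, range_proj_mul hc h1,
      hpq.mul_mul_mul_comm, range_proj_pow_mul hS, range_proj_pow_mul hT]
  · intro h
    have h0 : S * star S * (T * star T) = S * T * (star T * star S) := by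
      simpa using h 1 0 0 1
    have hST' : star T * star S = star S * star T := by
      rw [← star_mul, ← star_mul, hST]
    calc star S * T
        = star S * S * (star S * T) * (star T * T) := by rw [hS, hT, one_mul, mul_one]
      _ = star S * (S * star S * (T * star T)) * T := by simp only [mul_assoc]
      _ = star S * S * T * (star T * star S) * T := by rw [h0]; simp only [mul_assoc]
      _ = T * star S * (star T * T) := by rw [hS, one_mul, hST']; simp only [mul_assoc]
      _ = T * star S := by rw [hT, mul_one]
end

section
/- Let P be a left-cancellative monoid and P₁ a submonoid of P that is closed under factorization. Let H₁ ⊆ ℓ²(P) be the closed subspace of functions vanishing outside P₁ (canonically identified with ℓ²(P₁)). Then for every p ∈ P₁, the subspace H₁ is reducing for the left regular representation operator λ(p): both λ(p)H₁ ⊆ H₁ and λ(p)*H₁ ⊆ H₁ (equivalently, λ(p)(H₁^⊥) ⊆ H₁^⊥). Moreover, the restriction of λ(p) to H₁ coincides, under the identification H₁ ≅ ℓ²(P₁), with the left regular representation operator λ₁(p) of P₁. -/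
/-! A vector `f` of `ℓ²(ι)` is the norm-convergent sum of the vectors `f i • δ_i`, so a continuous
linear map on `ℓ²(ι)` is controlled by its values on the `δ_i` with `f i ≠ 0`
(`map_eq_zero_of_single`). Both invariance statements for `λ(p)` then reduce to basis vectors:
`p * q` lies in `P₁` if `q` does, and, as `P₁` is closed under factorization, only then. Since
`(λ(p)* f)(a) = ⟪δ_(pa), f⟫ = f (p * a)`, the same remark shows that `λ(p)*` preserves `H₁`. Finally
`λ(p) ∘ J` and `J ∘ λ₁(p)` agree on every `δ_q`, hence everywhere. -/

/-- A continuous linear map out of `ℓ²(ι)` that kills `δ_i` for every `i` in the support of `f`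
kills `f`. -/
theorem map_eq_zero_of_single {ι E : Type*} [DecidableEq ι] [NormedAddCommGroup E]
    [NormedSpace ℂ E] (T : lp (fun _ : ι => ℂ) 2 →L[ℂ] E) (f : lp (fun _ : ι => ℂ) 2)
    (h : ∀ i, f i ≠ 0 → T (lp.single 2 i 1) = 0) : T f = 0 := by
  have hs := (lp.hasSum_single (p := 2) (by simp) f).mapL T
  refine hs.unique ?_
  convert hasSum_zero with i
  have hi : lp.single (E := fun _ : ι => ℂ) 2 i (f i) = f i • lp.single 2 i 1 := by
    rw [← lp.single_smul, smul_eq_mul, mul_one]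
  rw [hi, map_smul]
  by_cases h0 : f i = 0
  · rw [h0, zero_smul]
  · rw [h i h0, smul_zero]

/-- A coordinate of `T f` vanishes as soon as it vanishes for `T δ_i` at every `i` in the
support of `f`. -/
theorem map_apply_eq_zero_of_single {ι : Type*} [DecidableEq ι]
    (T : lp (fun _ : ι => ℂ) 2 →L[ℂ] lp (fun _ : ι => ℂ) 2) (f : lp (fun _ : ι => ℂ) 2) (a : ι)
    (h : ∀ i, f i ≠ 0 → (T (lp.single 2 i 1)) a = 0) : (T f) a = 0 := by
  have key (g : lp (fun _ : ι => ℂ) 2) : inner ℂ (lp.single 2 a (1 : ℂ)) g = g a := by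
    simp [lp.inner_single_left]
  rw [← key]
  refine map_eq_zero_of_single ((innerSL ℂ (lp.single 2 a (1 : ℂ))).comp T) f fun i hi => ?_
  simpa [key] using h i hi

/-- If `P₁` is a submonoid of a left-cancellative monoid `P` closed under
factorization, then the subspace `H₁ ⊆ ℓ²(P)` of functions vanishing outside `P₁`
(identified with `ℓ²(P₁)`) is reducing for each `λ(p)`, `p ∈ P₁`: `λ(p)H₁ ⊆ H₁`,
`λ(p)*H₁ ⊆ H₁` (equivalently `λ(p)H₁^⊥ ⊆ H₁^⊥`), and under any identification
`J : ℓ²(P₁) → ℓ²(P)` with `Jδ_q = δ_q`, the restriction of `λ(p)` to `H₁` is the left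
regular representation operator `λ₁(p)` of `P₁`. -/
theorem reducing_subspace_of_submonoid {P : Type*} [Monoid P] [DecidableEq P]
    (hlc : ∀ p x y : P, p * x = p * y → x = y)
    (P₁ : Submonoid P)
    (hfac : ∀ x y : P, x * y ∈ P₁ → x ∈ P₁ ∧ y ∈ P₁)
    (Λ : P → lp (fun _ : P => ℂ) 2 →L[ℂ] lp (fun _ : P => ℂ) 2)
    (hΛ : ∀ p q : P, Λ p (lp.single 2 q 1) = lp.single 2 (p * q) 1)
    (Λ₁ : P₁ → lp (fun _ : P₁ => ℂ) 2 →L[ℂ] lp (fun _ : P₁ => ℂ) 2)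
    (hΛ₁ : ∀ p q : P₁, Λ₁ p (lp.single 2 q 1) = lp.single 2 (p * q) 1) :
    ∀ (p : P) (hp : p ∈ P₁),
      (∀ f : lp (fun _ : P => ℂ) 2, (∀ a : P, a ∉ P₁ → f a = 0) →
        ∀ a : P, a ∉ P₁ → (Λ p f) a = 0) ∧
      (∀ f : lp (fun _ : P => ℂ) 2, (∀ a : P, a ∉ P₁ → f a = 0) →
        ∀ a : P, a ∉ P₁ → (ContinuousLinearMap.adjoint (Λ p) f) a = 0) ∧
      (∀ f : lp (fun _ : P => ℂ) 2, (∀ a : P, a ∈ P₁ → f a = 0) →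
        ∀ a : P, a ∈ P₁ → (Λ p f) a = 0) ∧
      (∀ J : lp (fun _ : P₁ => ℂ) 2 →ₗᵢ[ℂ] lp (fun _ : P => ℂ) 2,
        (∀ q : P₁, J (lp.single 2 q 1) = lp.single 2 (q : P) 1) →
        ∀ f : lp (fun _ : P₁ => ℂ) 2, Λ p (J f) = J (Λ₁ ⟨p, hp⟩ f)) := by
  intro p hp
  have hmem (q : P) : p * q ∈ P₁ ↔ q ∈ P₁ := ⟨fun h => (hfac p q h).2, P₁.mul_mem hp⟩
  refine ⟨fun f hf a ha => ?_, fun f hf a ha => ?_, fun f hf a ha => ?_, fun J hJ f => ?_⟩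
  · refine map_apply_eq_zero_of_single _ f a fun q hq => ?_
    have hqP : q ∈ P₁ := by_contra fun h => hq (hf q h)
    have hne : a ≠ p * q := fun h => ha (h ▸ (hmem q).2 hqP)
    rw [hΛ, lp.single_apply_ne _ _ _ hne]
  · have h : inner ℂ (lp.single 2 a (1 : ℂ)) (ContinuousLinearMap.adjoint (Λ p) f) =
        f (p * a) := by
      rw [ContinuousLinearMap.adjoint_inner_right, hΛ, lp.inner_single_left]
      simp
    rw [lp.inner_single_left] at h
    have h' : (ContinuousLinearMap.adjoint (Λ p) f) a = f (p * a) := by simpa using h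
    rw [h', hf _ (mt (hmem a).1 ha)]
  · refine map_apply_eq_zero_of_single _ f a fun q hq => ?_
    have hqP : q ∉ P₁ := fun h => hq (hf q h)
    have hne : a ≠ p * q := fun h => hqP ((hmem q).1 (h ▸ ha))
    rw [hΛ, lp.single_apply_ne _ _ _ hne]
  · have h := map_eq_zero_of_single
      ((Λ p).comp J.toContinuousLinearMap - J.toContinuousLinearMap.comp (Λ₁ ⟨p, hp⟩)) f
      fun q _ => by simp [hJ, hΛ, hΛ₁]
    exact sub_eq_zero.1 h
end
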